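/- arXiv:quant-ph/0310001 — 5 statements merged into one kernel-verified Lean document; each statement's English description precedes it below -/
import Mathlib

section
/- Let B be a unital C*-subalgebra of B(H), let x ∈ H, and let ρ be a positive linear functional on B such that ρ(B) ≤ ⟨x, B x⟩ for every positive element B ∈ B (i.e., ρ ≤ ω_x|_B). Then there exists a positive operator T in the commutant B' with ‖T‖ ≤ 1 such that ρ(A) = ⟨x, T A x⟩ = ⟨T^{1/2} x, A (T^{1/2} x)⟩ for all A ∈ B. -/
open scoped InnerProductSpace ComplexOrder

/-- Pre-GNS construction, phrased existentially. -/
lemma exists_gns_map.{u} {A : Type u} [CStarAlgebra A] (f : A →ₗ[ℂ] ℂ)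
    (hf : ∀ c : A, 0 ≤ f (star c * c)) :
    ∃ (G : Type u) (_ : NormedAddCommGroup G) (_ : InnerProductSpace ℂ G) (_ : CompleteSpace G)
      (g : A →ₗ[ℂ] G), ∀ a b : A, ⟪g a, g b⟫_ℂ = f (star a * b) := by
  let : PartialOrder A := CStarAlgebra.spectralOrder A
  have : StarOrderedRing A := CStarAlgebra.spectralOrderedRing A
  let F : A →ₚ[ℂ] ℂ := PositiveLinearMap.mk₀ f (by
    intro a ha
    obtain ⟨c, rfl⟩ := CStarAlgebra.nonneg_iff_eq_star_mul_self.mp ha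
    exact hf c)
  refine ⟨F.GNS, inferInstance, inferInstance, inferInstance,
    (UniformSpace.Completion.toComplL (𝕜 := ℂ) (E := F.PreGNS)).toLinearMap ∘ₗ
      F.toPreGNS.toLinearMap, ?_⟩
  intro a b
  simp [PositiveLinearMap.preGNS_inner_def]
  rfl

/-- Extension of a contraction defined on the range of `e` to all of `H`. -/
lemma exists_extension {H G A : Type*} [NormedAddCommGroup H] [InnerProductSpace ℂ H]
    [CompleteSpace H] [NormedAddCommGroup G] [InnerProductSpace ℂ G] [CompleteSpace G]
    [AddCommGroup A] [Module ℂ A] (e : A →ₗ[ℂ] H) (g : A →ₗ[ℂ] G) (h : ∀ a, ‖g a‖ ≤ ‖e a‖) :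
    ∃ S : H →L[ℂ] G, ‖S‖ ≤ 1 ∧ (∀ a, S (e a) = g a) ∧
      ∀ y, (∀ a, ⟪e a, y⟫_ℂ = 0) → S y = 0 := by
  let K : Submodule ℂ H := (LinearMap.range e).topologicalClosure
  have : CompleteSpace K :=
    (LinearMap.range e).isClosed_topologicalClosure.completeSpace_coe
  have hmem : ∀ a, e a ∈ K := fun a =>
    (LinearMap.range e).le_topologicalClosure (LinearMap.mem_range_self e a)
  let e' : A →ₗ[ℂ] K := e.codRestrict K hmem
  have hd : DenseRange e' := by
    intro y
    have hy : (y : H) ∈ closure (Set.range e) := by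
      rw [← LinearMap.coe_range]
      exact y.2
    rw [closure_subtype]
    convert hy using 2
    ext z
    constructor
    · rintro ⟨_, ⟨a, rfl⟩, rfl⟩
      exact ⟨a, rfl⟩
    · rintro ⟨a, rfl⟩
      exact ⟨e' a, ⟨a, rfl⟩, rfl⟩
  have hn : ∀ a, ‖g a‖ ≤ 1 * ‖e' a‖ := by
    intro a
    rw [one_mul]
    exact h a
  refine ⟨(g.extendOfNorm e') ∘L K.orthogonalProjectionOnto, ?_, ?_, ?_⟩
  · refine (ContinuousLinearMap.opNorm_comp_le _ _).trans ?_
    exact mul_le_one₀ (LinearMap.opNorm_extendOfNorm_le hd zero_le_one hn) (norm_nonneg _)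
      K.orthogonalProjectionOnto_norm_le
  · intro a
    have : K.orthogonalProjectionOnto (e a) = e' a :=
      K.orthogonalProjectionOnto_mem_subspace_eq_self (e' a)
    rw [ContinuousLinearMap.comp_apply, this, LinearMap.extendOfNorm_eq hd ⟨1, hn⟩]
  · intro y hy
    have : K.orthogonalProjectionOnto y = 0 := by
      rw [Submodule.orthogonalProjectionOnto_eq_zero_iff]
      rw [Submodule.orthogonal_closure, Submodule.mem_orthogonal]
      rintro _ ⟨a, rfl⟩
      exact hy a
    rw [ContinuousLinearMap.comp_apply, this, map_zero]

/-- Two continuous linear maps agree if they agree on `range e` and on its orthogonal. -/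
lemma ext_range_orthogonal {H G A : Type*} [NormedAddCommGroup H] [InnerProductSpace ℂ H]
    [CompleteSpace H] [NormedAddCommGroup G] [InnerProductSpace ℂ G]
    [AddCommGroup A] [Module ℂ A] (e : A →ₗ[ℂ] H) (U V : H →L[ℂ] G)
    (h1 : ∀ a, U (e a) = V (e a))
    (h2 : ∀ y, (∀ a, ⟪e a, y⟫_ℂ = 0) → U y = V y) : U = V := by
  let K : Submodule ℂ H := (LinearMap.range e).topologicalClosure
  have : CompleteSpace K :=
    (LinearMap.range e).isClosed_topologicalClosure.completeSpace_coe
  have hK : K ≤ LinearMap.eqLocus U.toLinearMap V.toLinearMap := by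
    refine Submodule.topologicalClosure_minimal _ ?_ (isClosed_eq U.continuous V.continuous)
    rintro _ ⟨a, rfl⟩
    exact h1 a
  ext y
  obtain ⟨u, hu, v, hv, rfl⟩ := K.exists_add_mem_mem_orthogonal y
  have hu' : U u = V u := hK hu
  have hv' : U v = V v := by
    apply h2
    intro a
    exact (Submodule.mem_orthogonal _ _).mp hv _
      ((LinearMap.range e).le_topologicalClosure (LinearMap.mem_range_self e a))
  rw [map_add, map_add, hu', hv']

/-- **Lemma 1 (Kadison–Ringrose, Prop. 7.3.5).**
Let `B` be a unital C*-subalgebra of `B(H)`, let `x ∈ H`, and let `ρ` be a positive linear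
functional on `B` with `ρ ≤ ω_x|_B`.  Then there is a positive operator `T` in the commutant
`B'` with `‖T‖ ≤ 1` such that `ρ(A) = ⟨x, T A x⟩ = ⟨T^{1/2} x, A (T^{1/2} x)⟩` for all
`A ∈ B`.  (Here `T^{1/2}` is the positive square root of `T`, i.e. `CFC.sqrt T`.) -/
theorem positive_functional_dominated_by_vector_state
    {H : Type*} [NormedAddCommGroup H] [InnerProductSpace ℂ H] [CompleteSpace H]
    (B : StarSubalgebra ℂ (H →L[ℂ] H)) (hBclosed : IsClosed (B : Set (H →L[ℂ] H)))
    (x : H) (ρ : B →ₗ[ℂ] ℂ)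
    (hρpos : ∀ b : B, 0 ≤ (b : H →L[ℂ] H) → 0 ≤ ρ b)
    (hρdom : ∀ b : B, 0 ≤ (b : H →L[ℂ] H) → ρ b ≤ ⟪x, (b : H →L[ℂ] H) x⟫_ℂ) :
    ∃ T : H →L[ℂ] H, T ∈ Set.centralizer (B : Set (H →L[ℂ] H)) ∧ 0 ≤ T ∧ ‖T‖ ≤ 1 ∧
      ∀ b : B, ρ b = ⟪x, (T * (b : H →L[ℂ] H)) x⟫_ℂ ∧
        ρ b = ⟪CFC.sqrt T x, (b : H →L[ℂ] H) (CFC.sqrt T x)⟫_ℂ := by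
  have : IsClosed (B : Set (H →L[ℂ] H)) := hBclosed
  have hsq : ∀ c : B, 0 ≤ ((star c * c : B) : H →L[ℂ] H) := by
    intro c
    exact star_mul_self_nonneg (c : H →L[ℂ] H)
  have hadj : ∀ (c : B) (y z : H), ⟪y, (c : H →L[ℂ] H) z⟫_ℂ =
      ⟪((star c : B) : H →L[ℂ] H) y, z⟫_ℂ := by
    intro c y z
    exact (ContinuousLinearMap.adjoint_inner_left (c : H →L[ℂ] H) z y).symm
  obtain ⟨G, _, _, _, g, hg⟩ := exists_gns_map (A := B) ρ (fun c => hρpos _ (hsq c))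
  let e : B →ₗ[ℂ] H :=
    { toFun := fun b => (b : H →L[ℂ] H) x
      map_add' := fun a b => rfl
      map_smul' := fun r b => rfl }
  have hle : ∀ a, ‖g a‖ ≤ ‖e a‖ := by
    intro a
    have h1 := hρdom _ (hsq a)
    have h2 : ⟪x, ((star a * a : B) : H →L[ℂ] H) x⟫_ℂ = ⟪e a, e a⟫_ℂ := by
      rw [hadj (star a * a)]
      rw [star_mul, star_star]
      change ⟪((star a : B) : H →L[ℂ] H) ((a : H →L[ℂ] H) x), x⟫_ℂ = _
      rw [← hadj]
      rfl
    rw [h2, ← hg, inner_self_eq_norm_sq_to_K, inner_self_eq_norm_sq_to_K] at h1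
    have h3 : ‖g a‖ ^ 2 ≤ ‖e a‖ ^ 2 := by exact_mod_cast h1
    exact (sq_le_sq₀ (norm_nonneg _) (norm_nonneg _)).mp h3
  obtain ⟨S, hS1, hS2, hS3⟩ := exists_extension e g hle
  have hperp : ∀ (b : B) (y : H), (∀ a, ⟪e a, y⟫_ℂ = 0) →
      ∀ a, ⟪e a, (b : H →L[ℂ] H) y⟫_ℂ = 0 := by
    intro b y hy a
    rw [hadj]
    exact hy (star b * a)
  let T : H →L[ℂ] H := (ContinuousLinearMap.adjoint S) ∘L S
  have hTi : ∀ y z, ⟪y, T z⟫_ℂ = ⟪S y, S z⟫_ℂ := by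
    intro y z
    exact ContinuousLinearMap.adjoint_inner_right S y (S z)
  have hcomm : ∀ b : B, Commute T (b : H →L[ℂ] H) := by
    intro b
    change T * (b : H →L[ℂ] H) = (b : H →L[ℂ] H) * T
    have hflip : ∀ y z, ⟪y, ((b : H →L[ℂ] H) * T) z⟫_ℂ =
        ⟪S (((star b : B) : H →L[ℂ] H) y), S z⟫_ℂ := by
      intro y z
      rw [← hTi, ← hadj]
      rfl
    have hflip' : ∀ y z, ⟪y, (T * (b : H →L[ℂ] H)) z⟫_ℂ =
        ⟪S y, S ((b : H →L[ℂ] H) z)⟫_ℂ := by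
      intro y z
      rw [← hTi]
      rfl
    refine ext_range_orthogonal e _ _ ?_ ?_
    · intro c
      -- compare the functionals `y ↦ ⟪·, y⟫`
      have key : innerSL ℂ ((T * (b : H →L[ℂ] H)) (e c)) =
          innerSL ℂ (((b : H →L[ℂ] H) * T) (e c)) := by
        refine ext_range_orthogonal e _ _ ?_ ?_
        · intro a
          rw [innerSL_apply_apply, innerSL_apply_apply, ← inner_conj_symm,
            ← inner_conj_symm _ (e a), hflip, hflip']
          have h1 : (b : H →L[ℂ] H) (e c) = e (b * c) := rfl
          have h2 : ((star b : B) : H →L[ℂ] H) (e a) = e (star b * a) := rfl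
          rw [h1, h2, hS2, hS2, hS2, hS2, hg, hg, star_mul, star_star, mul_assoc]
        · intro y hy
          rw [innerSL_apply_apply, innerSL_apply_apply, ← inner_conj_symm,
            ← inner_conj_symm _ y, hflip, hflip', hS3 y hy, hS3 _ (hperp (star b) y hy),
            inner_zero_left, inner_zero_left]
      refine ext_inner_right ℂ fun v => ?_
      have := congrArg (fun φ => φ v) key
      simpa only [innerSL_apply_apply] using this
    · intro y hy
      refine ext_inner_left ℂ fun v => ?_
      rw [hflip, hflip', hS3 y hy, hS3 _ (hperp b y hy), inner_zero_right, inner_zero_right]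
  have hT0 : 0 ≤ T := by
    rw [ContinuousLinearMap.nonneg_iff_isPositive]
    exact ContinuousLinearMap.isPositive_adjoint_comp_self S
  have hval : ∀ b : B, ρ b = ⟪x, (T * (b : H →L[ℂ] H)) x⟫_ℂ := by
    intro b
    have h1 : ⟪x, (T * (b : H →L[ℂ] H)) x⟫_ℂ = ⟪S (e 1), S (e b)⟫_ℂ := by
      rw [← hTi]
      rfl
    rw [h1, hS2, hS2, hg, star_one, one_mul]
  refine ⟨T, ?_, hT0, ?_, fun b => ⟨hval b, ?_⟩⟩
  · intro b hb
    exact (hcomm ⟨b, hb⟩).symm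
  · have : ‖T‖ ≤ ‖ContinuousLinearMap.adjoint S‖ * ‖S‖ := ContinuousLinearMap.opNorm_comp_le _ _
    rw [LinearIsometryEquiv.norm_map] at this
    exact this.trans (mul_le_one₀ hS1 (norm_nonneg _) hS1)
  · have hs : Commute (CFC.sqrt T) (b : H →L[ℂ] H) := (hcomm b).cfcₙ_nnreal _
    have hsa : IsSelfAdjoint (CFC.sqrt T) := (CFC.sqrt_nonneg T).isSelfAdjoint
    have h2 : T * (b : H →L[ℂ] H) = CFC.sqrt T * ((b : H →L[ℂ] H) * CFC.sqrt T) := by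
      rw [← hs.eq, ← mul_assoc, CFC.sqrt_mul_sqrt_self T hT0]
    rw [hval b, h2]
    have h3 := ContinuousLinearMap.adjoint_inner_left (CFC.sqrt T)
      ((b : H →L[ℂ] H) (CFC.sqrt T x)) x
    rw [hsa.adjoint_eq] at h3
    exact h3.symm
end

section
/- Let B be a unital C*-subalgebra of B(H), let μ be a regular Borel probability measure on the state space K of B, and suppose there is a unit vector x ∈ H such that ω_x|_B is the barycenter of μ. Then there exists a positive-operator-valued measure A on (K, Σ) with A(S) ∈ B' for every S ∈ Σ, such that ⟨A(S)^{1/2} x, B (A(S)^{1/2} x)⟩ = ∫_S ω(B) dμ(ω) for all S ∈ Σ and all B ∈ B. -/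
open scoped InnerProductSpace ComplexOrder
open MeasureTheory

noncomputable section

variable {H : Type*} [NormedAddCommGroup H] [InnerProductSpace ℂ H] [CompleteSpace H]

/-- A state on a (C*-)subalgebra `B ⊆ B(H)`: a positive linear functional `ω` with
`ω(I) = 1`, regarded as an element of the weak-* dual of `B`. -/
def IsStateOn (B : StarSubalgebra ℂ (H →L[ℂ] H)) (ω : WeakDual ℂ B) : Prop :=
  (∀ b : B, 0 ≤ (b : H →L[ℂ] H) → 0 ≤ ω b) ∧ ω 1 = 1

/-- The state space `K` of `B`, equipped with the weak-* topology. -/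
abbrev StateSpace (B : StarSubalgebra ℂ (H →L[ℂ] H)) : Type _ :=
  {ω : WeakDual ℂ B // IsStateOn B ω}

/-- The Borel σ-algebra `Σ` of the state space `K`. -/
instance (B : StarSubalgebra ℂ (H →L[ℂ] H)) : MeasurableSpace (StateSpace B) := borel _

instance (B : StarSubalgebra ℂ (H →L[ℂ] H)) : BorelSpace (StateSpace B) := ⟨rfl⟩

/-- A positive-operator-valued measure on a measurable space `(X, Σ)`:
`0 ≤ A S ≤ I` for every `S ∈ Σ`, and `A` is countably additive in the weak operator
topology. -/
def IsPOVMeasure {X : Type*} [MeasurableSpace X] (A : Set X → (H →L[ℂ] H)) : Prop :=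
  (∀ S : Set X, MeasurableSet S → 0 ≤ A S ∧ A S ≤ 1) ∧
  ∀ f : ℕ → Set X, (∀ n, MeasurableSet (f n)) → Pairwise (Function.onFun Disjoint f) →
    ∀ y z : H, HasSum (fun n => ⟪y, A (f n) z⟫_ℂ) ⟪y, A (⋃ n, f n) z⟫_ℂ

theorem tomita_cauchy {V : Type*} [AddCommGroup V] [Module ℂ V]
    (φ : V →ₗ⋆[ℂ] V →ₗ[ℂ] ℂ) (hpos : ∀ v, 0 ≤ φ v v) (u v : V) :
    ‖φ u v‖ ^ 2 ≤ (φ u u).re * (φ v v).re := by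
  have him : ∀ v, (φ v v).im = 0 := fun v => ((Complex.nonneg_iff.1 (hpos v)).2).symm
  have hsymm : ∀ u v, starRingEnd ℂ (φ v u) = φ u v := by
    intro u v
    have h1 := him (u + v)
    have h2 := him (u + Complex.I • v)
    have hu := him u
    have hv := him v
    simp at h1 h2
    apply Complex.ext <;> simp <;> linarith
  let c : PreInnerProductSpace.Core ℂ V :=
    { inner := fun u v => φ u v
      conj_inner_symm := hsymm
      re_inner_nonneg := fun v => (Complex.nonneg_iff.1 (hpos v)).1
      add_left := fun x y z => by simp
      smul_left := fun x y r => by simp }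
  have h := @InnerProductSpace.Core.inner_mul_inner_self_le ℂ V _ _ _ c u v
  change ‖φ u v‖ * ‖φ v u‖ ≤ (φ u u).re * (φ v v).re at h
  have : ‖φ v u‖ = ‖φ u v‖ := by rw [← hsymm u v, RCLike.norm_conj]
  rw [this] at h
  nlinarith

theorem tomita_op {V M : Type*} [AddCommGroup V] [Module ℂ V] [NormedAddCommGroup M]
    [InnerProductSpace ℂ M] [CompleteSpace M] (T : V →ₗ[ℂ] M) (hT : DenseRange T)
    (φ : V →ₗ⋆[ℂ] V →ₗ[ℂ] ℂ) (hpos : ∀ v, 0 ≤ φ v v)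
    (hle : ∀ v, φ v v ≤ ⟪T v, T v⟫_ℂ) :
    ∃ A : M →L[ℂ] M, 0 ≤ A ∧ A ≤ 1 ∧ ‖A‖ ≤ 1 ∧ ∀ u v, ⟪T u, A (T v)⟫_ℂ = φ u v := by
  have hre : ∀ v, (φ v v).re ≤ ‖T v‖ ^ 2 := fun v => by
    have := (Complex.le_def.1 (hle v)).1
    rw [inner_self_eq_norm_sq_to_K] at this
    simpa [← Complex.ofReal_pow] using this
  have hre0 : ∀ v, 0 ≤ (φ v v).re := fun v => (Complex.nonneg_iff.1 (hpos v)).1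
  have hb : ∀ u v, ‖φ u v‖ ≤ ‖T u‖ * ‖T v‖ := fun u v => by
    refine abs_le_of_sq_le_sq' ?_ (by positivity) |>.2
    calc _ ≤ _ := tomita_cauchy φ hpos u v
      _ ≤ ‖T u‖ ^ 2 * ‖T v‖ ^ 2 := mul_le_mul (hre u) (hre v) (hre0 v) (by positivity)
      _ = _ := by ring
  let g : V → M := fun u => (InnerProductSpace.toDual ℂ M).symm ((φ u).extendOfNorm T)
  have hg : ∀ u v, ⟪g u, T v⟫_ℂ = φ u v := fun u v => by
    simp [g, LinearMap.extendOfNorm_eq hT ⟨_, hb u⟩]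
  have hgn : ∀ u, ‖g u‖ ≤ 1 * ‖T u‖ := fun u => by
    simp only [g, LinearIsometryEquiv.norm_map, one_mul]
    exact LinearMap.opNorm_extendOfNorm_le hT (norm_nonneg _) (hb u)
  let G : V →ₗ[ℂ] M :=
    { toFun := g
      map_add' := fun u v => hT.eq_of_inner_left ℂ fun w => by simp [inner_add_left, hg]
      map_smul' := fun r u => hT.eq_of_inner_left ℂ fun w => by simp [inner_smul_left, hg] }
  have hA : ∀ u v, ⟪G.extendOfNorm T (T u), T v⟫_ℂ = φ u v := fun u v => by
    rw [LinearMap.extendOfNorm_eq hT ⟨1, hgn⟩]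
    exact hg u v
  have hp : (G.extendOfNorm T).IsPositive := by
    rw [ContinuousLinearMap.isPositive_iff_complex]
    have : ∀ y, 0 ≤ ⟪G.extendOfNorm T y, y⟫_ℂ := by
      intro y
      refine hT.induction_on y (isClosed_le (by fun_prop) (by fun_prop)) fun v => ?_
      rw [hA]
      exact hpos v
    intro y
    have := Complex.nonneg_iff.1 (this y)
    exact ⟨Complex.ext (by simp) (by simpa using this.2), this.1⟩
  have hp1 : (1 - G.extendOfNorm T).IsPositive := by
    rw [ContinuousLinearMap.isPositive_iff_complex]
    have : ∀ y, 0 ≤ ⟪(1 - G.extendOfNorm T) y, y⟫_ℂ := by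
      intro y
      refine hT.induction_on y (isClosed_le (by fun_prop) (by fun_prop)) fun v => ?_
      rw [sub_apply, inner_sub_left, hA, sub_nonneg]
      exact hle v
    intro y
    have := Complex.nonneg_iff.1 (this y)
    exact ⟨Complex.ext (by simp) (by rw [Complex.ofReal_im]; exact this.2), this.1⟩
  refine ⟨G.extendOfNorm T, (ContinuousLinearMap.nonneg_iff_isPositive _).2 hp,
    (ContinuousLinearMap.le_def _ _).2 hp1,
    LinearMap.opNorm_extendOfNorm_le hT zero_le_one hgn, fun u v => ?_⟩
  rw [← hp.inner_left_eq_inner_right, hA]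

theorem tomita_tendsto {V M ι : Type*} [NormedAddCommGroup M] {T : V → M} (hT : DenseRange T)
    {l : Filter ι} (g : ι → M → ℂ) (C : ℝ) (hC : 0 ≤ C)
    (hg : ∀ i y z, ‖g i y - g i z‖ ≤ C * ‖y - z‖)
    (h : ∀ v, Filter.Tendsto (fun i => g i (T v)) l (nhds 0)) (y : M) :
    Filter.Tendsto (fun i => g i y) l (nhds 0) := by
  rw [Metric.tendsto_nhds]
  intro ε hε
  obtain ⟨v, hv⟩ := hT.exists_dist_lt y (show 0 < ε / (2 * (C + 1)) by positivity)
  filter_upwards [Metric.tendsto_nhds.1 (h v) (ε / 2) (by positivity)] with i hi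
  rw [dist_zero_right] at hi ⊢
  rw [dist_eq_norm] at hv
  have h1 := hg i y (T v)
  have h2 : (C + 1) * ‖y - T v‖ < ε / 2 := by
    rw [lt_div_iff₀ (by positivity)] at hv
    linarith
  have h3 : ‖g i y‖ ≤ ‖g i y - g i (T v)‖ + ‖g i (T v)‖ := by
    simpa using norm_add_le (g i y - g i (T v)) (g i (T v))
  nlinarith [norm_nonneg (y - T v)]

theorem tomita_ext {V M : Type*} [NormedAddCommGroup M]
    [InnerProductSpace ℂ M] {T : V → M} (hT : DenseRange T) {A A' : M →L[ℂ] M}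
    (h : ∀ u v, ⟪T u, A (T v)⟫_ℂ = ⟪T u, A' (T v)⟫_ℂ) : A = A' := by
  refine ContinuousLinearMap.coeFn_injective (hT.equalizer A.continuous A'.continuous ?_)
  funext v
  exact hT.eq_of_inner_right ℂ fun u => h u v

theorem tomita_state_bound (B : StarSubalgebra ℂ (H →L[ℂ] H)) (b : B) :
    ∃ C : ℝ, ∀ ω : StateSpace B, ‖ω.1 b‖ ≤ C := by
  have key : ∀ a : B, IsSelfAdjoint a → ∀ ω : StateSpace B, ‖ω.1 a‖ ≤ ‖a‖ := by
    intro a ha ω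
    have ha' : IsSelfAdjoint (a : H →L[ℂ] H) := congrArg Subtype.val ha
    have h1 := ω.2.1 (algebraMap ℂ B (‖a‖ : ℂ) - a) (by
      have := ha'.le_algebraMap_norm_self
      simpa using! this)
    have h2 := ω.2.1 (algebraMap ℂ B (‖a‖ : ℂ) + a) (by
      have := ha'.neg_algebraMap_norm_le_self
      rw [neg_le_iff_add_nonneg'] at this
      simpa using! this)
    rw [Algebra.algebraMap_eq_smul_one] at h1 h2
    rw [map_sub, map_smul, ω.2.2, smul_eq_mul, mul_one] at h1
    rw [map_add, map_smul, ω.2.2, smul_eq_mul, mul_one] at h2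
    rw [Complex.nonneg_iff] at h1 h2
    simp at h1 h2
    have : ω.1 a = ((ω.1 a).re : ℂ) := Complex.ext (by simp) (by simp [h2.2.symm])
    rw [this, Complex.norm_real, Real.norm_eq_abs, abs_le]
    change -‖(a : H →L[ℂ] H)‖ ≤ _ ∧ _ ≤ ‖(a : H →L[ℂ] H)‖
    constructor <;> linarith
  refine ⟨‖(realPart b : B)‖ + ‖(imaginaryPart b : B)‖, fun ω => ?_⟩
  conv_lhs => rw [← realPart_add_I_smul_imaginaryPart b]
  rw [map_add, map_smul]
  refine (norm_add_le _ _).trans (add_le_add (key _ (realPart b).2 ω) ?_)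
  rw [norm_smul, Complex.norm_I, one_mul]
  exact key _ (imaginaryPart b).2 ω

theorem tomita_integrable (B : StarSubalgebra ℂ (H →L[ℂ] H)) (b : B)
    (μ : Measure (StateSpace B)) [IsFiniteMeasure μ] : 
    Integrable (fun ω : StateSpace B => ω.1 b) μ := by
  obtain ⟨C, hC⟩ := tomita_state_bound B b
  refine Integrable.of_bound (Continuous.aestronglyMeasurable ?_) C (Filter.Eventually.of_forall hC)
  exact (WeakDual.eval_continuous b).comp continuous_subtype_val

def tomitaForm (B : StarSubalgebra ℂ (H →L[ℂ] H))
    (μ : Measure (StateSpace B)) [IsFiniteMeasure μ] : B →ₗ⋆[ℂ] B →ₗ[ℂ] ℂ :=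
  LinearMap.mk₂'ₛₗ (starRingEnd ℂ) (RingHom.id ℂ)
    (fun c b => ∫ ω : StateSpace B, ω.1 (star c * b) ∂μ)
    (fun c c' b => by
      simp only [star_add, add_mul, map_add]
      exact integral_add (tomita_integrable B _ μ) (tomita_integrable B _ μ))
    (fun r c b => by
      simp only [star_smul, smul_mul_assoc, map_smul]
      exact integral_smul _ _)
    (fun c b b' => by
      simp only [mul_add, map_add]
      exact integral_add (tomita_integrable B _ μ) (tomita_integrable B _ μ))
    (fun r c b => by
      simp only [mul_smul_comm, map_smul]
      exact integral_smul _ _)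

theorem tomitaForm_apply (B : StarSubalgebra ℂ (H →L[ℂ] H))
    (μ : Measure (StateSpace B)) [IsFiniteMeasure μ] (c b : B) :
    tomitaForm B μ c b = ∫ ω : StateSpace B, ω.1 (star c * b) ∂μ := rfl

theorem tomitaForm_nonneg (B : StarSubalgebra ℂ (H →L[ℂ] H))
    (μ : Measure (StateSpace B)) [IsFiniteMeasure μ] (b : B) :
    0 ≤ tomitaForm B μ b b := by
  rw [tomitaForm_apply]
  refine integral_nonneg fun ω => ω.2.1 _ ?_
  exact star_mul_self_nonneg (b : H →L[ℂ] H)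

set_option maxHeartbeats 2000000 in
/-- **Theorem 1 (Tomita).**  Let `B` be a unital C*-subalgebra of `B(H)` and `μ` a regular
Borel probability measure on the state space `K` of `B`.  If there is a unit vector
`x ∈ H` such that `ω_x|_B` is the barycenter of `μ`, then there is a POV measure `A` with
range in the commutant `B'` such that
`⟨A(S)^{1/2} x, B (A(S)^{1/2} x)⟩ = ∫_S ω(B) dμ(ω)` for all `S ∈ Σ` and `B ∈ B`. -/
theorem exists_povm_of_barycenter
    (B : StarSubalgebra ℂ (H →L[ℂ] H)) (hBclosed : IsClosed (B : Set (H →L[ℂ] H)))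
    (x : H) (hx : ‖x‖ = 1)
    (μ : Measure (StateSpace B)) [IsProbabilityMeasure μ] (hreg : μ.Regular)
    (hbary : ∀ b : B, ⟪x, (b : H →L[ℂ] H) x⟫_ℂ = ∫ ω : StateSpace B, ω.1 b ∂μ) :
    ∃ A : Set (StateSpace B) → (H →L[ℂ] H), IsPOVMeasure A ∧
      (∀ S : Set (StateSpace B), MeasurableSet S →
        A S ∈ Set.centralizer (B : Set (H →L[ℂ] H))) ∧
      ∀ S : Set (StateSpace B), MeasurableSet S → ∀ b : B,
        ⟪CFC.sqrt (A S) x, (b : H →L[ℂ] H) (CFC.sqrt (A S) x)⟫_ℂ =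
          ∫ ω in S, ω.1 b ∂μ := by
  let T₀ : B →ₗ[ℂ] H :=
    { toFun := fun b => (b : H →L[ℂ] H) x
      map_add' := fun a b => by simp
      map_smul' := fun r b => by simp }
  let M : Submodule ℂ H := (LinearMap.range T₀).topologicalClosure
  have hMc : IsClosed (M : Set H) := Submodule.isClosed_topologicalClosure _
  have : CompleteSpace M := hMc.completeSpace_coe
  let T : B →ₗ[ℂ] M := T₀.codRestrict M
    fun b => Submodule.le_topologicalClosure _ (LinearMap.mem_range_self T₀ b)
  let J : M →L[ℂ] H := M.subtypeL
  have hJT : ∀ b : B, J (T b) = (b : H →L[ℂ] H) x := fun b => rfl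
  have hT : DenseRange T := by
    intro m
    rw [closure_subtype]
    have h : Subtype.val '' Set.range T = (LinearMap.range T₀ : Set H) := by
      rw [← Set.range_comp]; rfl
    rw [h]
    exact m.2
  have hJJ : ∀ m : M, J.adjoint (J m) = m := fun m => by
    refine ext_inner_left ℂ fun y => ?_
    rw [ContinuousLinearMap.adjoint_inner_right]
    rfl
  have hTT : ∀ b c : B, ⟪T b, T c⟫_ℂ = tomitaForm B μ b c := fun b c => by
    rw [tomitaForm_apply, ← hbary]
    change ⟪(b : H →L[ℂ] H) x, (c : H →L[ℂ] H) x⟫_ℂ = _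
    rw [← ContinuousLinearMap.adjoint_inner_right]
    rfl
  have hex : ∀ S : Set (StateSpace B), ∃ A : M →L[ℂ] M, MeasurableSet S →
      0 ≤ A ∧ A ≤ 1 ∧ ‖A‖ ≤ 1 ∧ ∀ u v, ⟪T u, A (T v)⟫_ℂ = tomitaForm B (μ.restrict S) u v := by
    intro S
    by_cases hS : MeasurableSet S
    · obtain ⟨A, hA⟩ := tomita_op T hT (tomitaForm B (μ.restrict S)) (tomitaForm_nonneg B _) (by
        intro v
        rw [hTT, ← sub_nonneg]
        have h1 := tomitaForm_nonneg B (μ.restrict Sᶜ) v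
        rw [tomitaForm_apply] at h1
        rw [tomitaForm_apply, tomitaForm_apply,
          ← integral_add_compl hS (tomita_integrable B (star v * v) μ), add_sub_cancel_left]
        exact h1)
      exact ⟨A, fun _ => hA⟩
    · exact ⟨0, fun h => absurd h hS⟩
  choose A hA using hex
  -- compressions of the elements of `B`
  let β : B → (M →L[ℂ] M) := fun b => J.adjoint ∘L (b : H →L[ℂ] H) ∘L J
  have hβT : ∀ b c : B, β b (T c) = T (b * c) := fun b c => by
    change J.adjoint ((b : H →L[ℂ] H) (J (T c))) = _
    rw [← hJJ (T (b * c)), hJT, hJT]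
    rfl
  have hJβ : ∀ b : B, J ∘L β b = (b : H →L[ℂ] H) ∘L J := fun b => by
    refine ContinuousLinearMap.coeFn_injective (hT.equalizer (by fun_prop) (by fun_prop) ?_)
    funext c
    change J (β b (T c)) = (b : H →L[ℂ] H) (J (T c))
    rw [hβT, hJT, hJT]
    rfl
  have hβstar : ∀ b : B, (β b).adjoint = β (star b) := fun b => by
    simp only [β, ContinuousLinearMap.adjoint_comp, ContinuousLinearMap.adjoint_adjoint]
    rfl
  have hβJ : ∀ b : B, β b ∘L J.adjoint = J.adjoint ∘L (b : H →L[ℂ] H) := fun b => by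
    have h := congrArg ContinuousLinearMap.adjoint (hJβ (star b))
    rw [ContinuousLinearMap.adjoint_comp J (β (star b)), hβstar, star_star,
      ContinuousLinearMap.adjoint_comp] at h
    rw [h]
    congr 1
    exact star_star (b : H →L[ℂ] H)
  have hcomm0 : ∀ S, MeasurableSet S → ∀ b : B, A S ∘L β b = β b ∘L A S := fun S hS b => by
    refine tomita_ext hT fun u v => ?_
    change ⟪T u, A S (β b (T v))⟫_ℂ = ⟪T u, β b (A S (T v))⟫_ℂ
    rw [← ContinuousLinearMap.adjoint_inner_left (β b), hβstar, hβT, hβT, (hA S hS).2.2.2,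
      (hA S hS).2.2.2, tomitaForm_apply, tomitaForm_apply]
    simp [mul_assoc]
  have hcomm : ∀ S, MeasurableSet S → ∀ b : B,
      (b : H →L[ℂ] H) * (J ∘L A S ∘L J.adjoint) = (J ∘L A S ∘L J.adjoint) * (b : H →L[ℂ] H) := by
    intro S hS b
    calc (b : H →L[ℂ] H) * (J ∘L A S ∘L J.adjoint)
        = ((b : H →L[ℂ] H) ∘L J) ∘L A S ∘L J.adjoint := rfl
      _ = J ∘L (β b ∘L A S) ∘L J.adjoint := by rw [← hJβ]; rfl
      _ = J ∘L A S ∘L (β b ∘L J.adjoint) := by rw [← hcomm0 S hS]; rfl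
      _ = _ := by rw [hβJ]; rfl
  have hnn : ∀ S, MeasurableSet S → 0 ≤ J ∘L A S ∘L J.adjoint := fun S hS =>
    (ContinuousLinearMap.nonneg_iff_isPositive _).2
      (((ContinuousLinearMap.nonneg_iff_isPositive _).1 (hA S hS).1).conj_adjoint J)
  refine ⟨fun S => J ∘L A S ∘L J.adjoint, ⟨fun S hS => ⟨hnn S hS, ?_⟩, ?_⟩, ?_, ?_⟩
  · have h1 : J ∘L A S ∘L J.adjoint ≤ J ∘L J.adjoint := by
      rw [ContinuousLinearMap.le_def]
      have := ((ContinuousLinearMap.le_def _ _).1 (hA S hS).2.1).conj_adjoint J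
      convert! this using 1
    refine h1.trans ?_
    rw [ContinuousLinearMap.le_def]
    have h2 : (1 - J ∘L J.adjoint) = (1 - J ∘L J.adjoint).adjoint ∘L (1 - J ∘L J.adjoint) := by
      have h3 : (1 - J ∘L J.adjoint).adjoint = 1 - J ∘L J.adjoint := by
        rw [map_sub, ContinuousLinearMap.adjoint_comp, ContinuousLinearMap.adjoint_adjoint]
        congr 1
        exact star_one (H →L[ℂ] H)
      rw [h3]
      ext y
      simp [hJJ]
    rw [h2]
    exact ContinuousLinearMap.isPositive_adjoint_comp_self _
  · intro f hf hd y z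
    have hD : ∀ F : Finset ℕ, ‖A (⋃ n, f n) - ∑ n ∈ F, A (f n)‖ ≤ 1 := by
      intro F
      have hmF : MeasurableSet (⋃ n ∈ F, f n) := F.measurableSet_biUnion fun n _ => hf n
      have hm : MeasurableSet ((⋃ n, f n) \ ⋃ n ∈ F, f n) := (MeasurableSet.iUnion hf).diff hmF
      have h : A (⋃ n, f n) - ∑ n ∈ F, A (f n) = A ((⋃ n, f n) \ ⋃ n ∈ F, f n) := by
        refine tomita_ext hT fun u v => ?_
        rw [(hA _ hm).2.2.2, sub_apply, inner_sub_right,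
          (hA _ (MeasurableSet.iUnion hf)).2.2.2, sum_apply, inner_sum,
          Finset.sum_congr rfl fun n _ => (hA (f n) (hf n)).2.2.2 u v]
        simp only [tomitaForm_apply]
        rw [setIntegral_sdiff hmF (tomita_integrable B _ μ).integrableOn
          (Set.iUnion₂_subset fun n _ => Set.subset_iUnion f n),
          integral_biUnion_finset F (fun n _ => hf n) (fun i _ j _ hij => hd hij)
          (fun n _ => (tomita_integrable B _ μ).integrableOn)]
      rw [h]
      exact (hA _ hm).2.2.1
    have hTd : ∀ u v : B, Filter.Tendsto (fun F : Finset ℕ =>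
        ⟪T u, (A (⋃ n, f n) - ∑ n ∈ F, A (f n)) (T v)⟫_ℂ) Filter.atTop (nhds 0) := by
      intro u v
      have h := hasSum_integral_iUnion (μ := μ) hf hd
        (tomita_integrable B (star u * v) μ).integrableOn
      have h' := (tendsto_const_nhds (x := ∫ ω in ⋃ n, f n, ω.1 (star u * v) ∂μ)).sub h
      rw [sub_self] at h'
      refine h'.congr fun F => ?_
      rw [sub_apply, inner_sub_right,
          (hA _ (MeasurableSet.iUnion hf)).2.2.2, sum_apply, inner_sum,
          Finset.sum_congr rfl fun n _ => (hA (f n) (hf n)).2.2.2 u v]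
      rfl
    have hDz : ∀ (F : Finset ℕ) (z : M), ‖(A (⋃ n, f n) - ∑ n ∈ F, A (f n)) z‖ ≤ ‖z‖ :=
      fun F z => by simpa using ContinuousLinearMap.le_of_opNorm_le _ (hD F) z
    have h1 : ∀ (u : B) (z : M), Filter.Tendsto (fun F : Finset ℕ =>
        ⟪T u, (A (⋃ n, f n) - ∑ n ∈ F, A (f n)) z⟫_ℂ) Filter.atTop (nhds 0) := fun u z =>
      tomita_tendsto hT (fun (F : Finset ℕ) z => ⟪T u, (A (⋃ n, f n) - ∑ n ∈ F, A (f n)) z⟫_ℂ)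
        ‖T u‖ (norm_nonneg _) (fun F y z => by
          rw [← inner_sub_right, ← map_sub]
          exact (norm_inner_le_norm _ _).trans (by gcongr; exact hDz F _)) (hTd u) z
    have h2 : ∀ (y z : M), Filter.Tendsto (fun F : Finset ℕ =>
        ⟪y, (A (⋃ n, f n) - ∑ n ∈ F, A (f n)) z⟫_ℂ) Filter.atTop (nhds 0) := fun y z =>
      tomita_tendsto hT (fun (F : Finset ℕ) y => ⟪y, (A (⋃ n, f n) - ∑ n ∈ F, A (f n)) z⟫_ℂ)
        ‖z‖ (norm_nonneg _) (fun F y y' => by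
          rw [← inner_sub_left, mul_comm]
          exact (norm_inner_le_norm _ _).trans (by gcongr; exact hDz F _)) (fun u => h1 u z) y
    have h3 := (tendsto_const_nhds
      (x := ⟪J.adjoint y, A (⋃ n, f n) (J.adjoint z)⟫_ℂ)).sub (h2 (J.adjoint y) (J.adjoint z))
    rw [sub_zero] at h3
    have hJi : ∀ S, ⟪y, (J ∘L A S ∘L J.adjoint) z⟫_ℂ = ⟪J.adjoint y, A S (J.adjoint z)⟫_ℂ :=
      fun S => (ContinuousLinearMap.adjoint_inner_left J _ _).symm
    simp only [hJi]
    refine h3.congr fun F => ?_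
    rw [sub_apply, inner_sub_right, sum_apply, inner_sum]
    ring
  · intro S hS b hb
    exact hcomm S hS ⟨b, hb⟩
  · intro S hS b
    set R : H →L[ℂ] H := J ∘L A S ∘L J.adjoint with hR
    have hc : Commute R (b : H →L[ℂ] H) := (hcomm S hS b).symm
    have hc' : Commute (CFC.sqrt R) (b : H →L[ℂ] H) := hc.cfcₙ_nnreal _
    have hsa : (CFC.sqrt R).adjoint = CFC.sqrt R := (CFC.sqrt_nonneg R).isSelfAdjoint
    rw [← ContinuousLinearMap.adjoint_inner_right, hsa]
    have h1 : CFC.sqrt R ((b : H →L[ℂ] H) (CFC.sqrt R x)) = (b : H →L[ℂ] H) (R x) := by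
      change (CFC.sqrt R * ((b : H →L[ℂ] H) * CFC.sqrt R)) x = ((b : H →L[ℂ] H) * R) x
      rw [← mul_assoc, hc'.eq, mul_assoc, CFC.sqrt_mul_sqrt_self R (hnn S hS)]
    have h2 : J.adjoint x = T 1 := by
      rw [← hJJ (T 1), hJT]
      simp
    rw [h1, ← ContinuousLinearMap.adjoint_inner_left]
    change ⟪J (T (star b)), J (A S (J.adjoint x))⟫_ℂ = _
    rw [← ContinuousLinearMap.adjoint_inner_right, hJJ, h2, (hA S hS).2.2.2, tomitaForm_apply]
    simp

end
end

section
/- If A is a finite-dimensional unital C*-subalgebra of B(H) (i.e., a star-closed subalgebra containing I that is finite-dimensional as a complex vector space), then there exists a unital completely positive linear map Φ : B(H) → B(H) such that Φ ∘ Φ = Φ, the range of Φ equals the commutant A', and Φ(R₁ B R₂) = R₁ Φ(B) R₂ for all R₁, R₂ ∈ A' and all B ∈ B(H). -/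
open scoped InnerProductSpace ComplexOrder

noncomputable section

variable {H : Type*} [NormedAddCommGroup H] [InnerProductSpace ℂ H] [CompleteSpace H]

/-- Positivity of an `n × n` matrix of operators on `H`, expressed as positivity of the
corresponding operator on the `n`-fold Hilbert sum `H^n`:  `M ≥ 0` iff
`∑ i j, ⟨v i, M i j (v j)⟩ ≥ 0` for every `v ∈ H^n`. -/
def OpMatrixNonneg {n : ℕ} (M : Matrix (Fin n) (Fin n) (H →L[ℂ] H)) : Prop :=
  ∀ v : Fin n → H, 0 ≤ ∑ i, ∑ j, ⟪v i, M i j (v j)⟫_ℂ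

/-- A map `Φ : B(H) → B(H)` is completely positive if it is (complex) linear and, for every
`n ∈ ℕ`, its entrywise application to positive `n × n` matrices over `B(H)` (identified
with operators on `H^n`) preserves positivity. -/
def IsCompletelyPositiveMap (Φ : (H →L[ℂ] H) → (H →L[ℂ] H)) : Prop :=
  IsLinearMap ℂ Φ ∧ ∀ (n : ℕ) (M : Matrix (Fin n) (Fin n) (H →L[ℂ] H)),
    OpMatrixNonneg M → OpMatrixNonneg (M.map Φ)

/-- The averaging operator over a compact group of unitaries. -/
theorem exists_cp_projection_of_compact_group {G : Type*} [Group G] [TopologicalSpace G]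
    [IsTopologicalGroup G] [CompactSpace G] (u : G →* (H →L[ℂ] H)) (hu : Continuous u)
    (h1 : ∀ g, u g * star (u g) = 1) (h2 : ∀ g, star (u g) * u g = 1) :
    ∃ Φ : (H →L[ℂ] H) → (H →L[ℂ] H),
      IsCompletelyPositiveMap Φ ∧ Φ 1 = 1 ∧ (∀ B g, u g * Φ B = Φ B * u g) ∧
      ∀ R₁ R₂ : H →L[ℂ] H, (∀ g, u g * R₁ = R₁ * u g) → (∀ g, u g * R₂ = R₂ * u g) →
          ∀ B : H →L[ℂ] H, Φ (R₁ * B * R₂) = R₁ * Φ B * R₂ := by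
  letI : MeasurableSpace G := borel G
  haveI : BorelSpace G := ⟨rfl⟩
  let μ : MeasureTheory.Measure G := MeasureTheory.Measure.haarMeasure ⊤
  haveI : MeasureTheory.IsProbabilityMeasure μ := ⟨by
    simpa using MeasureTheory.Measure.haarMeasure_self (K₀ := (⊤ : TopologicalSpace.PositiveCompacts G))⟩
  have hc : ∀ B, Continuous (fun g => u g * B * star (u g)) := fun B =>
    (hu.mul continuous_const).mul hu.star
  have hi : ∀ B, MeasureTheory.Integrable (fun g => u g * B * star (u g)) μ := fun B =>
    (hc B).integrable_of_hasCompactSupport (HasCompactSupport.of_compactSpace _)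
  have pull : ∀ L R B : H →L[ℂ] H, L * (∫ g, u g * B * star (u g) ∂μ) * R
      = ∫ g, L * (u g * B * star (u g)) * R ∂μ := by
    intro L R B
    have := ContinuousLinearMap.integral_comp_comm
      (((ContinuousLinearMap.mul ℂ (H →L[ℂ] H)).flip R).comp
        (ContinuousLinearMap.mul ℂ (H →L[ℂ] H) L)) (hi B)
    simpa using this.symm
  have su : ∀ g R, (∀ g, u g * R = R * u g) → star (u g) * R = R * star (u g) := by
    intro g R hR
    calc star (u g) * R = star (u g) * (R * u g) * star (u g) := by
          rw [mul_assoc, mul_assoc, h1, mul_one]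
      _ = R * star (u g) := by rw [← hR, ← mul_assoc, h2, one_mul]
  refine ⟨fun B => ∫ g, u g * B * star (u g) ∂μ, ⟨⟨?_, ?_⟩, ?_⟩, ?_, ?_, ?_⟩
  · intro B C
    rw [← MeasureTheory.integral_add (hi B) (hi C)]
    simp only [mul_add, add_mul]
  · intro c B
    rw [← MeasureTheory.integral_smul]
    simp only [mul_smul_comm, smul_mul_assoc]
  · intro n M hM v
    have key : ∀ i j, ⟪v i, (M.map (fun B => ∫ g, u g * B * star (u g) ∂μ)) i j (v j)⟫_ℂ
        = ∫ g, ⟪star (u g) (v i), M i j (star (u g) (v j))⟫_ℂ ∂μ := by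
      intro i j
      have := ContinuousLinearMap.integral_comp_comm
        ((innerSL ℂ (v i)).comp (ContinuousLinearMap.apply ℂ H (v j))) (hi (M i j))
      simp only [ContinuousLinearMap.comp_apply, ContinuousLinearMap.apply_apply,
        innerSL_apply_apply] at this
      rw [Matrix.map_apply, ← this]
      congr 1
      ext g
      simp only [ContinuousLinearMap.mul_apply', ContinuousLinearMap.mul_apply,
        ContinuousLinearMap.star_eq_adjoint, ContinuousLinearMap.adjoint_inner_left]
    have hint : ∀ i j, MeasureTheory.Integrable
        (fun g => ⟪star (u g) (v i), M i j (star (u g) (v j))⟫_ℂ) μ := by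
      intro i j
      refine Continuous.integrable_of_hasCompactSupport ?_ (HasCompactSupport.of_compactSpace _)
      have := hu.star
      fun_prop
    simp only [key]
    have : (∑ i, ∑ j, ∫ g, ⟪star (u g) (v i), M i j (star (u g) (v j))⟫_ℂ ∂μ)
        = ∫ g, ∑ i, ∑ j, ⟪star (u g) (v i), M i j (star (u g) (v j))⟫_ℂ ∂μ := by
      rw [MeasureTheory.integral_finsetSum _
        (fun i _ => MeasureTheory.integrable_finsetSum _ (fun j _ => hint i j))]
      refine Finset.sum_congr rfl fun i _ => ?_
      rw [MeasureTheory.integral_finsetSum _ (fun j _ => hint i j)]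
    rw [this]
    exact MeasureTheory.integral_nonneg (fun g => hM (fun i => star (u g) (v i)))
  · simp [h1]
  · intro B g
    have h : u g * (∫ g, u g * B * star (u g) ∂μ) * star (u g)
        = ∫ g, u g * B * star (u g) ∂μ := by
      rw [pull, ← MeasureTheory.integral_mul_left_eq_self (fun g => u g * B * star (u g)) g]
      simp only [map_mul, star_mul, mul_assoc]
    calc _ = u g * (∫ g, u g * B * star (u g) ∂μ) * star (u g) * u g := by
          rw [mul_assoc _ (star (u g)), h2, mul_one]
      _ = _ := by rw [h]
  · intro R₁ R₂ hR₁ hR₂ B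
    simp only [pull]
    congr 1
    ext1 g
    calc u g * (R₁ * B * R₂) * star (u g) = (u g * R₁) * B * (R₂ * star (u g)) := by
          simp only [mul_assoc]
      _ = _ := by rw [hR₁, ← su g R₂ hR₂]; simp only [mul_assoc]

/-- **Lemma 2.**  If `A` is a finite-dimensional unital C*-subalgebra of `B(H)` (a
star-closed unital subalgebra that is finite-dimensional as a complex vector space), then
there is a unital completely positive projection `Φ` of `B(H)` onto the commutant `A'`
which is an `A'`-bimodule map. -/
theorem exists_cp_projection_onto_commutant_of_finiteDimensional
    (A : StarSubalgebra ℂ (H →L[ℂ] H)) [FiniteDimensional ℂ A] :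
    ∃ Φ : (H →L[ℂ] H) → (H →L[ℂ] H),
      IsCompletelyPositiveMap Φ ∧ Φ 1 = 1 ∧ Φ ∘ Φ = Φ ∧
      Set.range Φ = Set.centralizer (A : Set (H →L[ℂ] H)) ∧
      ∀ R₁ ∈ Set.centralizer (A : Set (H →L[ℂ] H)),
        ∀ R₂ ∈ Set.centralizer (A : Set (H →L[ℂ] H)),
          ∀ B : H →L[ℂ] H, Φ (R₁ * B * R₂) = R₁ * Φ B * R₂ := by
  haveI : IsClosed (A : Set (H →L[ℂ] H)) :=
    Submodule.closed_of_finiteDimensional (Subalgebra.toSubmodule A.toSubalgebra)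
  haveI : ProperSpace A := FiniteDimensional.proper ℂ A
  haveI : CompactSpace (unitary A) := by
    refine isCompact_iff_compactSpace.mp (Metric.isCompact_of_isClosed_isBounded
      isClosed_unitary ?_)
    refine (Metric.isBounded_closedBall (x := (0 : A)) (r := 1)).subset fun x hx => ?_
    rw [mem_closedBall_zero_iff]
    rcases subsingleton_or_nontrivial A with h | h
    · rw [Subsingleton.elim x 0]; simp
    · exact (CStarRing.norm_of_mem_unitary hx).le
  let u : unitary A →* (H →L[ℂ] H) := A.subtype.toMonoidHom.comp (unitary A).subtype
  have hu : ∀ g : unitary A, u g = ((g : A) : H →L[ℂ] H) := fun _ => rfl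
  obtain ⟨Φ, hcp, hone, hcomm, hbi⟩ := exists_cp_projection_of_compact_group u
    (continuous_subtype_val.comp continuous_subtype_val)
    (fun g => by
      have := congrArg (Subtype.val) (Unitary.mul_star_self_of_mem g.2)
      exact this)
    (fun g => by
      have := congrArg (Subtype.val) (Unitary.star_mul_self_of_mem g.2)
      exact this)
  have mem : ∀ B, Φ B ∈ Set.centralizer (A : Set (H →L[ℂ] H)) := by
    intro B a ha
    have hs : (⟨a, ha⟩ : A) ∈ Submodule.span ℂ (unitary A : Set A) := by
      rw [CStarAlgebra.span_unitary]; trivial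
    have : ∀ x ∈ Submodule.span ℂ (unitary A : Set A),
        (x : H →L[ℂ] H) * Φ B = Φ B * (x : H →L[ℂ] H) := by
      intro x hx
      induction hx using Submodule.span_induction with
      | mem x h => exact hcomm B ⟨x, h⟩
      | zero => simp
      | add x y _ _ hx hy => simp [add_mul, mul_add, hx, hy]
      | smul c x _ hx => simp [hx]
    exact this _ hs
  have hcent : ∀ R ∈ Set.centralizer (A : Set (H →L[ℂ] H)), ∀ g, u g * R = R * u g :=
    fun R hR g => hR _ (g : A).2
  have fix : ∀ R ∈ Set.centralizer (A : Set (H →L[ℂ] H)), Φ R = R := by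
    intro R hR
    have := hbi R 1 (hcent R hR) (by simp) 1
    simpa [hone] using this
  refine ⟨Φ, hcp, hone, funext fun B => fix _ (mem B), ?_, ?_⟩
  · ext R
    exact ⟨by rintro ⟨B, rfl⟩; exact mem B, fun h => ⟨R, fix R h⟩⟩
  · exact fun R₁ h₁ R₂ h₂ B => hbi R₁ R₂ (hcent R₁ h₁) (hcent R₂ h₂) B

end
end

section
/- Let M ⊆ B(H) be a von Neumann algebra, let (X, Σ) be a measurable space, let A be a POV measure on (X, Σ) with A(S) ∈ M' for every S ∈ Σ, and let Φ : B(H) → B(H) be a unital completely positive linear map with Φ ∘ Φ = Φ and range equal to M. Then the map ℰ defined by ℰ[S](B) := Φ(B) A(S) is a CP instrument on B(H): for each B the map S ↦ ℰ[S](B) is countably additive in the weak operator topology, and for each S the map B ↦ ℰ[S](B) is completely positive with ℰ[S](I) ≤ I. Moreover ℰ is compatible with A (i.e., ℰ[S](I) = A(S) for all S ∈ Σ) and ℰ is local to M' (i.e., ℰ[S](B) = ℰ[S](I)·B for all B ∈ M'' = M and all S ∈ Σ). -/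
open scoped InnerProductSpace ComplexOrder

noncomputable section

variable {H : Type*} [NormedAddCommGroup H] [InnerProductSpace ℂ H] [CompleteSpace H]

/-- A completely positive instrument on `B(H)` over `(X, Σ)`: for fixed `B` it is countably
additive in the weak operator topology, and for fixed `S ∈ Σ` it is a completely positive
map with `ℰ[S](I) ≤ I`. -/
def IsCPInstrument {X : Type*} [MeasurableSpace X]
    (ℰ : Set X → (H →L[ℂ] H) → (H →L[ℂ] H)) : Prop :=
  (∀ B : H →L[ℂ] H, ∀ f : ℕ → Set X, (∀ n, MeasurableSet (f n)) →
      Pairwise (Function.onFun Disjoint f) →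
      ∀ y z : H, HasSum (fun n => ⟪y, ℰ (f n) B z⟫_ℂ) ⟪y, ℰ (⋃ n, f n) B z⟫_ℂ) ∧
  ∀ S : Set X, MeasurableSet S → IsCompletelyPositiveMap (ℰ S) ∧ ℰ S 1 ≤ 1

/-- An instrument is local to an algebra `A ⊆ B(H)` if `ℰ[S](B) = ℰ[S](I)·B` for all `B`
in the commutant `A'` and all `S ∈ Σ`. -/
def InstrumentLocalTo {X : Type*} [MeasurableSpace X]
    (ℰ : Set X → (H →L[ℂ] H) → (H →L[ℂ] H)) (A : Set (H →L[ℂ] H)) : Prop :=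
  ∀ S : Set X, MeasurableSet S → ∀ B ∈ Set.centralizer A, ℰ S B = ℰ S 1 * B

/-- **Tensoring a CP projection onto `M` with a POV measure in `M'` gives a CP instrument.**
Let `M` be a von Neumann algebra on `H`, `A` a POV measure with range in `M'`, and `Φ` a
unital CP idempotent on `B(H)` with range `M`.  Then `ℰ[S](B) := Φ(B) A(S)` is a CP
instrument that is compatible with `A` (`ℰ[S](I) = A(S)`) and local to `M'`
(`ℰ[S](B) = ℰ[S](I)·B` for `B ∈ M'' = M`). -/
theorem cp_projection_tensor_povm_is_instrument
    (M : VonNeumannAlgebra H) (X : Type*) [MeasurableSpace X]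
    (A : Set X → (H →L[ℂ] H)) (hA : IsPOVMeasure A)
    (hAcomm : ∀ S : Set X, MeasurableSet S → A S ∈ M.commutant)
    (Φ : (H →L[ℂ] H) → (H →L[ℂ] H))
    (hΦcp : IsCompletelyPositiveMap Φ) (hΦ1 : Φ 1 = 1) (hΦidem : Φ ∘ Φ = Φ)
    (hΦran : Set.range Φ = (M : Set (H →L[ℂ] H)))
    (ℰ : Set X → (H →L[ℂ] H) → (H →L[ℂ] H))
    (hℰ : ∀ (S : Set X) (B : H →L[ℂ] H), ℰ S B = Φ B * A S) :
    IsCPInstrument ℰ ∧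
      (∀ S : Set X, MeasurableSet S → ℰ S 1 = A S) ∧
      InstrumentLocalTo ℰ (M.commutant : Set (H →L[ℂ] H)) := by
  have hcomm : ∀ (S : Set X), MeasurableSet S → ∀ B : H →L[ℂ] H, Commute (A S) (Φ B) := by
    intro S hS B
    have h1 := hAcomm S hS
    rw [VonNeumannAlgebra.mem_commutant_iff] at h1
    have h2 : Φ B ∈ (M : Set (H →L[ℂ] H)) := hΦran ▸ Set.mem_range_self B
    exact (h1 (Φ B) h2).symm
  have hone : ∀ S : Set X, ℰ S 1 = A S := by
    intro S
    rw [hℰ, hΦ1, one_mul]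
  refine ⟨⟨?_, ?_⟩, fun S _ => hone S, ?_⟩
  · intro B f hf hd y z
    have h := hA.2 f hf hd (ContinuousLinearMap.adjoint (Φ B) y) z
    simpa only [hℰ, mul_apply_eq_comp, ContinuousLinearMap.adjoint_inner_left] using h
  · intro S hS
    refine ⟨⟨⟨?_, ?_⟩, ?_⟩, ?_⟩
    · intro B C
      rw [hℰ, hℰ, hℰ, hΦcp.1.map_add, add_mul]
    · intro c B
      rw [hℰ, hℰ, hΦcp.1.map_smul, smul_mul_assoc]
    · intro n N hN v
      have hpos := (hA.1 S hS).1
      set C : H →L[ℂ] H := CFC.sqrt (A S) with hC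
      have hCC : C * C = A S := CFC.sqrt_mul_sqrt_self (A S) hpos
      have hCsa : IsSelfAdjoint C := IsSelfAdjoint.of_nonneg (CFC.sqrt_nonneg (A S))
      have hCc : ∀ B, Commute C (Φ B) := fun B => (hcomm S hS B).cfcₙ_nnreal _
      have key := hΦcp.2 n N hN (fun i => C (v i))
      refine key.trans_eq (Finset.sum_congr rfl fun i _ => Finset.sum_congr rfl fun j _ => ?_)
      have e : ℰ S (N i j) = C * (Φ (N i j) * C) := by
        rw [hℰ, ← hCC, ← mul_assoc, ← mul_assoc, (hCc (N i j)).eq]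
      rw [Matrix.map_apply, Matrix.map_apply, e, mul_apply_eq_comp,
        mul_apply_eq_comp, ← ContinuousLinearMap.adjoint_inner_left C,
        ← ContinuousLinearMap.star_eq_adjoint, hCsa.star_eq]
    · rw [hone]
      exact (hA.1 S hS).2
  · intro S hS B hB
    have hBM : B ∈ (M : Set (H →L[ℂ] H)) := by
      rw [VonNeumannAlgebra.coe_commutant, VonNeumannAlgebra.centralizer_centralizer] at hB
      exact hB
    rw [← hΦran] at hBM
    obtain ⟨D, rfl⟩ := hBM
    have hid : Φ (Φ D) = Φ D := congrFun hΦidem D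
    rw [hone, hℰ, hid, (hcomm S hS D).eq]

end
end

section
/- Generalized HJW theorem (finite case): Let B be a unital C*-subalgebra of B(H), let x be a unit vector in H, and let μ be a regular Borel probability measure on the state space K of B whose barycenter is ω_x|_B. If the commutant B' is finite-dimensional as a complex vector space, then there exists a CP instrument ℰ on B(H) over (K, Σ) that is local to B' and satisfies ⟨x, ℰ[S](B) x⟩ = ∫_S ω(B) dμ(ω) for all S ∈ Σ and all B ∈ B. -/
open scoped InnerProductSpace ComplexOrder
open MeasureTheory

noncomputable section

variable {H : Type*} [NormedAddCommGroup H] [InnerProductSpace ℂ H] [CompleteSpace H]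

lemma exists_condExp (M : StarSubalgebra ℂ (H →L[ℂ] H)) [FiniteDimensional ℂ M] :
    ∃ E : (H →L[ℂ] H) →ₗ[ℂ] (H →L[ℂ] H),
      (∀ A, ∀ m ∈ M, Commute m (E A)) ∧
      (∀ C, (∀ m ∈ M, Commute m C) → E C = C) ∧
      ∀ (n : ℕ) (N : Matrix (Fin n) (Fin n) (H →L[ℂ] H)),
        OpMatrixNonneg N → OpMatrixNonneg (N.map E) := by
  have hclosed : IsClosed (M : Set (H →L[ℂ] H)) :=
    Submodule.closed_of_finiteDimensional (Subalgebra.toSubmodule M.toSubalgebra)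
  let : CStarAlgebra M := StarSubalgebra.cstarAlgebra M (h_closed := hclosed)
  have : ProperSpace M := FiniteDimensional.proper ℂ M
  have : CompactSpace (unitary M) := by
    refine isCompact_iff_compactSpace (s := (unitary M : Set M)).1 ?_
    refine Metric.isCompact_of_isClosed_isBounded isClosed_unitary ?_
    refine (Metric.isBounded_iff_subset_closedBall 0).2 ⟨1, fun u hu => ?_⟩
    rw [mem_closedBall_zero_iff]
    rcases subsingleton_or_nontrivial M with h | h
    · simp [Subsingleton.elim u 0]
    · exact (CStarRing.norm_of_mem_unitary hu).le
  let : MeasurableSpace (unitary M) := borel _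
  have : BorelSpace (unitary M) := ⟨rfl⟩
  let ν : Measure (unitary M) := Measure.haarMeasure ⊤
  have : IsProbabilityMeasure ν := ⟨by
    have := Measure.haarMeasure_self (G := unitary M) (K₀ := ⊤)
    simpa using this⟩
  let c : unitary M → (H →L[ℂ] H) := fun u => ((u : M) : H →L[ℂ] H)
  have hc : Continuous c := by fun_prop
  have hcont : ∀ A, Continuous fun u => c u * A * star (c u) := fun A => by fun_prop
  have hint : ∀ A, Integrable (fun u => c u * A * star (c u)) ν := fun A =>
    (hcont A).integrable_of_hasCompactSupport (HasCompactSupport.of_compactSpace _)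
  have hcc : ∀ u, c u * star (c u) = 1 := fun u => by
    have := Unitary.coe_mul_star_self u
    exact congrArg (Subtype.val : M → _) this
  have hcc' : ∀ u, star (c u) * c u = 1 := fun u => by
    have := Unitary.coe_star_mul_self u
    exact congrArg (Subtype.val : M → _) this
  have hmul : ∀ u v, c (u * v) = c u * c v := fun u v => rfl
  let E : (H →L[ℂ] H) →ₗ[ℂ] (H →L[ℂ] H) :=
    { toFun := fun A => ∫ u, c u * A * star (c u) ∂ν
      map_add' := fun A A' => by
        rw [← integral_add (hint A) (hint A')]
        simp only [mul_add, add_mul]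
      map_smul' := fun r A => by
        rw [RingHom.id_apply, ← integral_smul]
        simp only [mul_smul_comm, smul_mul_assoc] }
  have hE : ∀ A, E A = ∫ u, c u * A * star (c u) ∂ν := fun A => rfl
  have hinv : ∀ A v, c v * E A * star (c v) = E A := fun A v => by
    have h1 : c v * E A * star (c v)
        = ∫ u, c (v * u) * A * star (c (v * u)) ∂ν := by
      have := ((ContinuousLinearMap.mul ℂ (H →L[ℂ] H) (c v)).comp
        ((ContinuousLinearMap.mul ℂ (H →L[ℂ] H)).flip (star (c v)))).integral_comp_comm (hint A)
      simp only [ContinuousLinearMap.comp_apply, ContinuousLinearMap.flip_apply,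
        ContinuousLinearMap.mul_apply'] at this
      rw [hE, mul_assoc, ← this]
      simp only [hmul, star_mul, mul_assoc]
    rw [h1]
    exact integral_mul_left_eq_self (fun u => c u * A * star (c u)) v
  refine ⟨E, ?_, ?_, ?_⟩
  · intro A m hm
    have hu : ∀ v, c v * E A = E A * c v := fun v => by
      conv_rhs => rw [← hinv A v]
      rw [mul_assoc, mul_assoc, hcc', mul_one]
    have hspan : (⟨m, hm⟩ : M) ∈ Submodule.span ℂ (unitary M : Set M) := by
      rw [CStarAlgebra.span_unitary]; trivial
    have key : ∀ w ∈ Submodule.span ℂ (unitary M : Set M),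
        (w : H →L[ℂ] H) * E A = E A * (w : H →L[ℂ] H) := by
      intro w hw
      induction hw using Submodule.span_induction with
      | mem w hw => exact hu ⟨w, hw⟩
      | zero => simp
      | add a b _ _ ha hb => simp [add_mul, mul_add, ha, hb]
      | smul r a _ ha => simp [ha]
    exact key _ hspan
  · intro C hC
    rw [hE]
    have : ∀ u, c u * C * star (c u) = C := fun u => by
      rw [(hC (c u) (u : M).2).eq, mul_assoc, hcc, mul_one]
    simp [this]
  · intro n N hN v
    have h1 : ∀ i j, ⟪v i, (N.map E) i j (v j)⟫_ℂ
        = ∫ u, ⟪star (c u) (v i), N i j (star (c u) (v j))⟫_ℂ ∂ν := fun i j => by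
      have := ((innerSL ℂ (v i)).comp
        (ContinuousLinearMap.apply ℂ H (v j))).integral_comp_comm (hint (N i j))
      simp only [ContinuousLinearMap.comp_apply, innerSL_apply_apply,
        ContinuousLinearMap.apply_apply] at this
      rw [Matrix.map_apply, hE, ← this]
      congr 1; ext u
      simp [ContinuousLinearMap.star_eq_adjoint, ContinuousLinearMap.adjoint_inner_left]
    have h2 : ∀ i j, Integrable
        (fun u => ⟪star (c u) (v i), N i j (star (c u) (v j))⟫_ℂ) ν := fun i j => by
      refine Continuous.integrable_of_hasCompactSupport ?_ (HasCompactSupport.of_compactSpace _)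
      fun_prop
    simp only [h1]
    simp_rw [← integral_finsetSum _ (fun j _ => h2 _ j)]
    rw [← integral_finsetSum _ (fun i _ => integrable_finsetSum _ (fun j _ => h2 i j))]
    exact integral_nonneg fun u => hN (fun i => star (c u) (v i))


universe u

/-- The cyclic subspace. -/
def cyc (B : StarSubalgebra ℂ (H →L[ℂ] H)) (x : H) : B →ₗ[ℂ] H where
  toFun b := (b : H →L[ℂ] H) x
  map_add' a b := by simp
  map_smul' r a := by simp

def cycK (B : StarSubalgebra ℂ (H →L[ℂ] H)) (x : H) : Submodule ℂ H :=
  (LinearMap.range (cyc B x)).topologicalClosure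

instance (B : StarSubalgebra ℂ (H →L[ℂ] H)) (x : H) : CompleteSpace (cycK B x) :=
  (Submodule.isClosed_topologicalClosure _).completeSpace_coe

lemma cycK_mem (B : StarSubalgebra ℂ (H →L[ℂ] H)) (x : H) (b : B) : (b : H →L[ℂ] H) x ∈ cycK B x :=
  Submodule.le_topologicalClosure _ ⟨b, rfl⟩

lemma cycK_approx (B : StarSubalgebra ℂ (H →L[ℂ] H)) (x : H) {y : H} (hy : y ∈ cycK B x)
    {ε : ℝ} (hε : 0 < ε) : ∃ b : B, ‖y - (b : H →L[ℂ] H) x‖ < ε := by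
  obtain ⟨_, ⟨b, rfl⟩, h⟩ := Metric.mem_closure_iff.1 (show y ∈ closure _ from hy) ε hε
  exact ⟨b, by rwa [dist_eq_norm] at h⟩

lemma weak_tendsto (B : StarSubalgebra ℂ (H →L[ℂ] H)) (x : H) {ι : Type*} {l : Filter ι}
    (X : ι → (H →L[ℂ] H)) {C : ℝ} (hX : ∀ i, ‖X i‖ ≤ C)
    (hP : ∀ i y z, ⟪y, X i z⟫_ℂ =
      ⟪(cycK B x).starProjection y, X i ((cycK B x).starProjection z)⟫_ℂ)
    (h0 : ∀ a b : B, Filter.Tendsto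
      (fun i => ⟪(a : H →L[ℂ] H) x, X i ((b : H →L[ℂ] H) x)⟫_ℂ) l (nhds 0))
    (y z : H) : Filter.Tendsto (fun i => ⟪y, X i z⟫_ℂ) l (nhds 0) := by
  -- reduce to y, z in the cyclic space
  suffices h : ∀ y ∈ cycK B x, ∀ z ∈ cycK B x,
      Filter.Tendsto (fun i => ⟪y, X i z⟫_ℂ) l (nhds 0) by
    simp_rw [hP _ y z]
    exact h _ (Submodule.starProjection_apply_mem _ _) _ (Submodule.starProjection_apply_mem _ _)
  have hX' : ∀ i, ‖X i‖ ≤ |C| := fun i => (hX i).trans (le_abs_self C)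
  have bd : ∀ i (u v : H), ‖⟪u, X i v⟫_ℂ‖ ≤ ‖u‖ * (|C| * ‖v‖) := fun i u v =>
    (norm_inner_le_norm _ _).trans (by
      gcongr
      exact ((X i).le_opNorm v).trans (by gcongr; exact hX' i))
  have step1 : ∀ a : B, ∀ z ∈ cycK B x,
      Filter.Tendsto (fun i => ⟪(a : H →L[ℂ] H) x, X i z⟫_ℂ) l (nhds 0) := by
    intro a z hz
    rw [Metric.tendsto_nhds]
    intro ε hε
    set K := ‖(a : H →L[ℂ] H) x‖ * |C| + 1
    have hK : 0 < K := by positivity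
    obtain ⟨b, hb⟩ := cycK_approx B x hz (show 0 < ε / 2 / K by positivity)
    filter_upwards [Metric.tendsto_nhds.1 (h0 a b) (ε / 2) (by positivity)] with i hi
    rw [dist_zero_right] at hi ⊢
    have e : ⟪(a : H →L[ℂ] H) x, X i z⟫_ℂ = ⟪(a : H →L[ℂ] H) x, X i (z - (b : H →L[ℂ] H) x)⟫_ℂ
        + ⟪(a : H →L[ℂ] H) x, X i ((b : H →L[ℂ] H) x)⟫_ℂ := by
      rw [map_sub, inner_sub_right]; ring
    rw [e]
    have := bd i ((a : H →L[ℂ] H) x) (z - (b : H →L[ℂ] H) x)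
    have h2 : ‖(a : H →L[ℂ] H) x‖ * (|C| * ‖z - (b : H →L[ℂ] H) x‖) ≤ ε / 2 := by
      calc _ ≤ K * (ε / 2 / K) := by
            rw [← mul_assoc]; gcongr; simp [K]
        _ = ε / 2 := by field_simp
    exact (norm_add_le _ _).trans_lt (by linarith)
  intro y hy z hz
  rw [Metric.tendsto_nhds]
  intro ε hε
  set K := |C| * ‖z‖ + 1
  have hK : 0 < K := by positivity
  obtain ⟨a, ha⟩ := cycK_approx B x hy (show 0 < ε / 2 / K by positivity)
  filter_upwards [Metric.tendsto_nhds.1 (step1 a z hz) (ε / 2) (by positivity)] with i hi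
  rw [dist_zero_right] at hi ⊢
  have e : ⟪y, X i z⟫_ℂ = ⟪y - (a : H →L[ℂ] H) x, X i z⟫_ℂ
      + ⟪(a : H →L[ℂ] H) x, X i z⟫_ℂ := by
    rw [inner_sub_left]; ring
  rw [e]
  have := bd i (y - (a : H →L[ℂ] H) x) z
  have h2 : ‖y - (a : H →L[ℂ] H) x‖ * (|C| * ‖z‖) ≤ ε / 2 := by
    calc _ ≤ (ε / 2 / K) * K := by
          gcongr; simp [K]
      _ = ε / 2 := by field_simp
  exact (norm_add_le _ _).trans_lt (by linarith)

lemma weak_unique (B : StarSubalgebra ℂ (H →L[ℂ] H)) (x : H) (X : H →L[ℂ] H)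
    (hP : ∀ y z, ⟪y, X z⟫_ℂ =
      ⟪(cycK B x).starProjection y, X ((cycK B x).starProjection z)⟫_ℂ)
    (h0 : ∀ a b : B, ⟪(a : H →L[ℂ] H) x, X ((b : H →L[ℂ] H) x)⟫_ℂ = 0) : X = 0 := by
  ext z
  refine ext_inner_left ℂ fun y => ?_
  have := weak_tendsto B x (l := (⊤ : Filter ℕ)) (fun _ => X) (C := ‖X‖) (fun _ => le_rfl)
    (fun _ => hP) (fun a b => by simp [h0]) y z
  simpa using tendsto_nhds_unique tendsto_const_nhds this

lemma cyc_proj_comm (B : StarSubalgebra ℂ (H →L[ℂ] H)) (x : H) (c : B) (y : H) :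
    (cycK B x).starProjection ((c : H →L[ℂ] H) y)
      = (c : H →L[ℂ] H) ((cycK B x).starProjection y) := by
  have inv : ∀ c : B, ∀ y ∈ cycK B x, (c : H →L[ℂ] H) y ∈ cycK B x := by
    intro c y hy
    have : Set.MapsTo (c : H →L[ℂ] H) (LinearMap.range (cyc B x) : Set H)
        (LinearMap.range (cyc B x) : Set H) := by
      rintro _ ⟨b, rfl⟩
      exact ⟨c * b, rfl⟩
    exact this.closure (c : H →L[ℂ] H).continuous hy
  refine Submodule.eq_starProjection_of_mem_of_inner_eq_zero
    (inv c _ (Submodule.starProjection_apply_mem _ _)) fun w hw => ?_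
  rw [← map_sub, ← ContinuousLinearMap.adjoint_inner_right]
  have h := inv (star c) w hw
  exact Submodule.starProjection_inner_eq_zero y _ h

lemma exists_gns {H : Type u} [NormedAddCommGroup H] [InnerProductSpace ℂ H] [CompleteSpace H]
    (B : StarSubalgebra ℂ (H →L[ℂ] H)) (hB : IsClosed (B : Set (H →L[ℂ] H)))
    (φ : B →ₗ[ℂ] ℂ) (hpos : ∀ a : B, 0 ≤ φ (star a * a)) :
    ∃ (G : Type u) (_ : NormedAddCommGroup G) (_ : InnerProductSpace ℂ G) (_ : CompleteSpace G)
      (g : B →ₗ[ℂ] G), ∀ a b, ⟪g a, g b⟫_ℂ = φ (star a * b) := by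
  let : CStarAlgebra B := StarSubalgebra.cstarAlgebra B (h_closed := hB)
  let : PartialOrder B := CStarAlgebra.spectralOrder B
  have : StarOrderedRing B := CStarAlgebra.spectralOrderedRing B
  let f : B →ₚ[ℂ] ℂ := PositiveLinearMap.mk₀ φ (fun a ha => by
    obtain ⟨s, rfl⟩ := CStarAlgebra.nonneg_iff_eq_star_mul_self.1 ha
    exact hpos s)
  let g : B →ₗ[ℂ] f.GNS :=
    (UniformSpace.Completion.toComplL (𝕜 := ℂ) (E := f.PreGNS)).toLinearMap ∘ₗ
      f.toPreGNS.toLinearMap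
  have hg : ∀ a b, ⟪g a, g b⟫_ℂ = φ (star a * b) := fun a b =>
    (UniformSpace.Completion.inner_coe _ _).trans rfl
  exact ⟨f.GNS, inferInstance, inferInstance, inferInstance, g, hg⟩

lemma exists_W (B : StarSubalgebra ℂ (H →L[ℂ] H)) (x : H)
    {G : Type*} [NormedAddCommGroup G] [InnerProductSpace ℂ G] [CompleteSpace G]
    (g : B →ₗ[ℂ] G) (hgn : ∀ b : B, ‖g b‖ ≤ ‖(b : H →L[ℂ] H) x‖) :
    ∃ W : H →L[ℂ] G, ‖W‖ ≤ 1 ∧ (∀ b : B, W ((b : H →L[ℂ] H) x) = g b) ∧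
      ∀ y, W ((cycK B x).starProjection y) = W y := by
  let e : B →ₗ[ℂ] cycK B x := (cyc B x).codRestrict _ (cycK_mem B x)
  have he : DenseRange e := by
    intro ⟨y, hy⟩
    rw [Metric.mem_closure_iff]
    intro ε hε
    obtain ⟨b, hb⟩ := cycK_approx B x hy hε
    exact ⟨e b, ⟨b, rfl⟩, by rw [dist_eq_norm]; exact hb⟩
  have hn : ∀ b, ‖g b‖ ≤ 1 * ‖e b‖ := fun b => by
    rw [one_mul]
    exact hgn b
  let V := g.extendOfNorm e
  have hV : ∀ b, V (e b) = g b := LinearMap.extendOfNorm_eq he ⟨1, hn⟩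
  have hVn : ‖V‖ ≤ 1 := LinearMap.opNorm_extendOfNorm_le he zero_le_one hn
  let W : H →L[ℂ] G := V.comp (cycK B x).orthogonalProjectionOnto
  have hWn : ‖W‖ ≤ 1 := (ContinuousLinearMap.opNorm_comp_le _ _).trans
    (mul_le_one₀ hVn (norm_nonneg _) (Submodule.orthogonalProjectionOnto_norm_le _))
  have hWb : ∀ b : B, W ((b : H →L[ℂ] H) x) = g b := fun b => by
    rw [← hV b]
    exact congrArg V (Submodule.orthogonalProjectionOnto_mem_subspace_eq_self (e b))
  have hWP : ∀ y, W ((cycK B x).starProjection y) = W y := fun y =>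
    congrArg V (Submodule.orthogonalProjectionOnto_mem_subspace_eq_self _)
  exact ⟨W, hWn, hWb, hWP⟩

lemma exists_adj {G : Type*} [NormedAddCommGroup G] [InnerProductSpace ℂ G] [CompleteSpace G]
    (W : H →L[ℂ] G) (hWn : ‖W‖ ≤ 1) :
    ∃ T : H →L[ℂ] H, (∀ y z, ⟪y, T z⟫_ℂ = ⟪W y, W z⟫_ℂ) ∧ ‖T‖ ≤ 1 ∧ T.IsPositive := by
  refine ⟨(ContinuousLinearMap.adjoint W).comp W, fun y z => ?_, ?_,
    ContinuousLinearMap.isPositive_adjoint_comp_self W⟩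
  · rw [ContinuousLinearMap.comp_apply, ContinuousLinearMap.adjoint_inner_right]
  · rw [ContinuousLinearMap.norm_adjoint_comp_self]
    exact mul_le_one₀ hWn (norm_nonneg _) hWn

lemma exists_T (B : StarSubalgebra ℂ (H →L[ℂ] H)) (hB : IsClosed (B : Set (H →L[ℂ] H))) (x : H)
    (φ : B →ₗ[ℂ] ℂ) (hpos : ∀ a : B, 0 ≤ φ (star a * a))
    (hle : ∀ a : B, (φ (star a * a)).re ≤ ‖(a : H →L[ℂ] H) x‖ ^ 2) :
    ∃ T : H →L[ℂ] H, T.IsPositive ∧ T ≤ 1 ∧ ‖T‖ ≤ 1 ∧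
      (∀ a b : B, ⟪(a : H →L[ℂ] H) x, T ((b : H →L[ℂ] H) x)⟫_ℂ = φ (star a * b)) ∧
      (∀ y z, ⟪y, T z⟫_ℂ =
        ⟪(cycK B x).starProjection y, T ((cycK B x).starProjection z)⟫_ℂ) ∧
      ∀ c : B, (c : H →L[ℂ] H) * T = T * c := by
  obtain ⟨G, _, _, _, g, hg⟩ := exists_gns B hB φ hpos
  have hn : ∀ b : B, ‖g b‖ ≤ ‖(b : H →L[ℂ] H) x‖ := fun b => by
    refine le_of_sq_le_sq ?_ (norm_nonneg _)
    rw [← inner_self_eq_norm_sq (𝕜 := ℂ), hg]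
    exact hle b
  obtain ⟨W, hWn, hWb, hWP⟩ := exists_W B x g hn
  obtain ⟨T, hT, hTn, hTP⟩ := exists_adj W hWn
  have hTB : ∀ a b : B, ⟪(a : H →L[ℂ] H) x, T ((b : H →L[ℂ] H) x)⟫_ℂ = φ (star a * b) :=
    fun a b => by rw [hT, hWb, hWb, hg]
  have hTK : ∀ y z, ⟪y, T z⟫_ℂ =
        ⟪(cycK B x).starProjection y, T ((cycK B x).starProjection z)⟫_ℂ := fun y z => by
    rw [hT, hT, hWP, hWP]
  refine ⟨T, hTP, ?_, hTn, hTB, hTK, ?_⟩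
  · have h0 : (0 : H →L[ℂ] H) ≤ T := (ContinuousLinearMap.nonneg_iff_isPositive T).2 hTP
    exact (CStarAlgebra.norm_le_one_iff_of_nonneg T h0).1 hTn
  · intro c
    rw [← sub_eq_zero]
    have adj : ∀ y z, ⟪y, (c : H →L[ℂ] H) z⟫_ℂ = ⟪((star c : B) : H →L[ℂ] H) y, z⟫_ℂ :=
      fun y z => (ContinuousLinearMap.adjoint_inner_left _ _ _).symm
    refine weak_unique B x _ (fun y z => ?_) (fun a b => ?_)
    · simp only [ContinuousLinearMap.sub_apply, ContinuousLinearMap.mul_apply, inner_sub_right]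
      rw [adj, adj, hTK _ z, hTK y, cyc_proj_comm, cyc_proj_comm]
    · simp only [ContinuousLinearMap.sub_apply, ContinuousLinearMap.mul_apply, inner_sub_right]
      rw [adj]
      have h1 := hTB (star c * a) b
      have h2 := hTB a (c * b)
      rw [star_mul, star_star, mul_assoc] at h1
      rw [← h2] at h1
      exact sub_eq_zero.2 h1


lemma state_bound (B : StarSubalgebra ℂ (H →L[ℂ] H)) (ω : StateSpace B) (b : B) :
    ‖ω.1 b‖ ≤ 2 * ‖b‖ := by
  have sa : ∀ b : B, IsSelfAdjoint b → ‖ω.1 b‖ ≤ ‖b‖ := by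
    intro b hb
    have hb' : IsSelfAdjoint (b : H →L[ℂ] H) := congrArg (Subtype.val : B → _) hb
    have h1 := hb'.le_algebraMap_norm_self
    have h2 := hb'.neg_algebraMap_norm_le_self
    have e : ((((‖b‖ : ℝ) : ℂ) • (1 : B) : B) : H →L[ℂ] H)
        = algebraMap ℝ (H →L[ℂ] H) ‖(b : H →L[ℂ] H)‖ := by
      rw [Algebra.algebraMap_eq_smul_one]
      simp
    have p1 := ω.2.1 (((‖b‖ : ℝ) : ℂ) • (1 : B) - b) (by
      rw [AddSubgroupClass.coe_sub, e]; exact sub_nonneg.2 h1)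
    have p2 := ω.2.1 (((‖b‖ : ℝ) : ℂ) • (1 : B) + b) (by
      rw [AddMemClass.coe_add, e]; exact neg_le_iff_add_nonneg'.1 h2)
    rw [map_sub, map_smul, ω.2.2] at p1
    rw [map_add, map_smul, ω.2.2] at p2
    simp only [Complex.nonneg_iff, smul_eq_mul, mul_one, Complex.sub_re, Complex.sub_im,
      Complex.add_re, Complex.add_im, Complex.ofReal_re, Complex.ofReal_im] at p1 p2
    have him : (ω.1 b).im = 0 := by linarith [p2.2]
    have : ω.1 b = (((ω.1 b).re : ℝ) : ℂ) := Complex.ext rfl (by simp [him])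
    rw [this, Complex.norm_real, Real.norm_eq_abs, abs_le]
    constructor <;> linarith [p1.1, p2.1]
  have hr := sa (realPart b : B) (realPart b).2
  have hi := sa (imaginaryPart b : B) (imaginaryPart b).2
  have hrn : ‖(realPart b : B)‖ ≤ ‖b‖ := realPart.norm_le b
  have hin : ‖(imaginaryPart b : B)‖ ≤ ‖b‖ := imaginaryPart.norm_le b
  have hd := realPart_add_I_smul_imaginaryPart b
  calc ‖ω.1 b‖ = ‖ω.1 (realPart b : B) + Complex.I • ω.1 (imaginaryPart b : B)‖ := by
        conv_lhs => rw [← hd]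
        rw [map_add, map_smul]
    _ ≤ ‖ω.1 (realPart b : B)‖ + ‖ω.1 (imaginaryPart b : B)‖ := by
        refine (norm_add_le _ _).trans ?_
        rw [norm_smul]; simp
    _ ≤ _ := by linarith

lemma state_integrable (B : StarSubalgebra ℂ (H →L[ℂ] H))
    (μ : Measure (StateSpace B)) [IsProbabilityMeasure μ] (b : B) :
    Integrable (fun ω : StateSpace B => ω.1 b) μ := by
  have hc : Continuous (fun ω : StateSpace B => ω.1 b) :=
    (WeakDual.eval_continuous b).comp continuous_subtype_val
  exact Integrable.of_bound hc.measurable.aestronglyMeasurable (2 * ‖b‖)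
    (Filter.Eventually.of_forall fun ω => state_bound B ω b)

/-- The functional `b ↦ ∫_S ω(b) dμ`. -/
def phi (B : StarSubalgebra ℂ (H →L[ℂ] H))
    (μ : Measure (StateSpace B)) [IsProbabilityMeasure μ] (S : Set (StateSpace B)) :
    B →ₗ[ℂ] ℂ where
  toFun b := ∫ ω in S, ω.1 b ∂μ
  map_add' a b := by
    rw [← integral_add (state_integrable B μ a).integrableOn (state_integrable B μ b).integrableOn]
    simp only [map_add]
  map_smul' r a := by
    rw [RingHom.id_apply, ← integral_smul]
    simp only [map_smul]

lemma state_star_mul_nonneg (B : StarSubalgebra ℂ (H →L[ℂ] H)) (ω : StateSpace B) (a : B) :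
    0 ≤ ω.1 (star a * a) :=
  ω.2.1 _ (by simpa using star_mul_self_nonneg (a : H →L[ℂ] H))

lemma cp_mul (T : H →L[ℂ] H) (hT : T.IsPositive) (E : (H →L[ℂ] H) →ₗ[ℂ] (H →L[ℂ] H))
    (hc : ∀ A, Commute T (E A))
    (hE : ∀ (n : ℕ) (N : Matrix (Fin n) (Fin n) (H →L[ℂ] H)),
        OpMatrixNonneg N → OpMatrixNonneg (N.map E)) :
    IsCompletelyPositiveMap (fun A => T * E A) := by
  refine ⟨⟨fun A A' => by simp [mul_add], fun r A => by simp⟩, fun n N hN v => ?_⟩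
  have hT0 : (0 : H →L[ℂ] H) ≤ T := (ContinuousLinearMap.nonneg_iff_isPositive T).2 hT
  set R := CFC.sqrt T
  have hR : R * R = T := CFC.sqrt_mul_sqrt_self T hT0
  have hRs : IsSelfAdjoint R := (CFC.sqrt_nonneg T).isSelfAdjoint
  have hRc : ∀ A, Commute R (E A) := fun A => Commute.cfcₙ_nnreal (hc A) _
  have h := hE n N hN (fun i => R (v i))
  refine h.trans_eq (Finset.sum_congr rfl fun i _ => Finset.sum_congr rfl fun j _ => ?_)
  simp only [Matrix.map_apply]
  have := ContinuousLinearMap.adjoint_inner_left R (E (N i j) (R (v j))) (v i)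
  rw [← ContinuousLinearMap.star_eq_adjoint, hRs.star_eq] at this
  have h2 : T * E (N i j) = R * (E (N i j) * R) := by
    rw [← hR, mul_assoc, (hRc _).eq]
  rw [this, h2]
  rfl

/-- **Generalized HJW theorem (finite case, Theorem 3).**  Let `B` be a unital
C*-subalgebra of `B(H)`, `x` a unit vector, and `μ` a regular Borel probability measure on
the state space of `B` with barycenter `ω_x|_B`.  If the commutant `B'` is
finite-dimensional, then there is a CP instrument `ℰ` on `B(H)` local to `B'` with
`⟨x, ℰ[S](B) x⟩ = ∫_S ω(B) dμ(ω)` for all Borel `S` and all `B ∈ B`. -/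
theorem generalized_HJW_finiteDimensional
    (B : StarSubalgebra ℂ (H →L[ℂ] H)) (hBclosed : IsClosed (B : Set (H →L[ℂ] H)))
    (x : H) (hx : ‖x‖ = 1)
    (μ : Measure (StateSpace B)) [IsProbabilityMeasure μ] (hreg : μ.Regular)
    (hbary : ∀ b : B, ⟪x, (b : H →L[ℂ] H) x⟫_ℂ = ∫ ω : StateSpace B, ω.1 b ∂μ)
    (hfin : FiniteDimensional ℂ (Subalgebra.centralizer ℂ (B : Set (H →L[ℂ] H)))) :
    ∃ ℰ : Set (StateSpace B) → (H →L[ℂ] H) → (H →L[ℂ] H),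
      IsCPInstrument ℰ ∧
      InstrumentLocalTo ℰ (Set.centralizer (B : Set (H →L[ℂ] H))) ∧
      ∀ S : Set (StateSpace B), MeasurableSet S → ∀ b : B,
        ⟪x, ℰ S (b : H →L[ℂ] H) x⟫_ℂ = ∫ ω in S, ω.1 b ∂μ := by
  have hpos : ∀ S, ∀ a : B, 0 ≤ phi B μ S (star a * a) := fun S a =>
    integral_nonneg fun ω => state_star_mul_nonneg B ω a
  have hle : ∀ S, ∀ a : B, (phi B μ S (star a * a)).re ≤ ‖(a : H →L[ℂ] H) x‖ ^ 2 := by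
    intro S a
    have hi := state_integrable B μ (star a * a)
    have e1 : (phi B μ S (star a * a)).re = ∫ ω in S, (ω.1 (star a * a)).re ∂μ :=
      (integral_re hi.integrableOn).symm
    have e2 : ‖(a : H →L[ℂ] H) x‖ ^ 2 = ∫ ω, ((ω : StateSpace B).1 (star a * a)).re ∂μ := by
      have h3 : (∫ ω, ((ω : StateSpace B).1 (star a * a)).re ∂μ)
          = (∫ ω, (ω : StateSpace B).1 (star a * a) ∂μ).re := integral_re hi
      rw [h3, ← hbary, ← inner_self_eq_norm_sq (𝕜 := ℂ),
        ← ContinuousLinearMap.adjoint_inner_right]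
      rfl
    rw [e1, e2]
    exact setIntegral_le_integral hi.re (Filter.Eventually.of_forall fun ω =>
      (Complex.nonneg_iff.1 (state_star_mul_nonneg B ω a)).1)
  choose T hTpos hT1 hTn hTB hTK hTc using fun S => exists_T B hBclosed x (phi B μ S) (hpos S) (hle S)
  let M : StarSubalgebra ℂ (H →L[ℂ] H) := StarSubalgebra.centralizer ℂ (B : Set (H →L[ℂ] H))
  have hM : ∀ m, m ∈ M ↔ m ∈ Set.centralizer (B : Set (H →L[ℂ] H)) := by
    intro m
    rw [StarSubalgebra.mem_centralizer_iff, Set.mem_centralizer_iff]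
    exact ⟨fun h g hg => (h g hg).1, fun h g hg => ⟨h g hg, h _ (star_mem hg)⟩⟩
  have hMfin : FiniteDimensional ℂ M := by
    let j : M →ₗ[ℂ] Subalgebra.centralizer ℂ (B : Set (H →L[ℂ] H)) :=
      { toFun := fun m => ⟨m, (hM m).1 m.2⟩
        map_add' := fun _ _ => rfl
        map_smul' := fun _ _ => rfl }
    refine FiniteDimensional.of_injective j fun a b h => ?_
    exact Subtype.ext (congrArg (Subtype.val : Subalgebra.centralizer ℂ (B : Set (H →L[ℂ] H)) → _) h)
  obtain ⟨E, hEc, hEid, hEcp⟩ := exists_condExp M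
  have hTM : ∀ S, T S ∈ M := fun S => (hM _).2 (Set.mem_centralizer_iff.2 fun g hg => hTc S ⟨g, hg⟩)
  have hEid' : ∀ C ∈ Set.centralizer (Set.centralizer (B : Set (H →L[ℂ] H))), E C = C :=
    fun C hC => hEid C fun m hm => hC m ((hM m).1 hm)
  have hE1 : E 1 = 1 := hEid 1 fun m _ => Commute.one_right m
  refine ⟨fun S A => T S * E A, ⟨?_, ?_⟩, ?_, ?_⟩
  · intro A f hf hd y z
    simp only [ContinuousLinearMap.mul_apply]
    generalize E A z = z
    have hadd : ∀ F : Finset ℕ, T (⋃ n, f n) - ∑ n ∈ F, T (f n)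
        = T ((⋃ n, f n) \ ⋃ n ∈ F, f n) := by
      intro F
      rw [← sub_eq_zero]
      refine weak_unique B x _ (fun y z => ?_) (fun a b => ?_)
      · simp only [ContinuousLinearMap.sub_apply, ContinuousLinearMap.sum_apply, inner_sub_right,
          inner_sum]
        rw [hTK _ y z, hTK _ y z, Finset.sum_congr rfl fun n _ => hTK (f n) y z]
      · simp only [ContinuousLinearMap.sub_apply, ContinuousLinearMap.sum_apply, inner_sub_right,
          inner_sum, hTB]
        have hi := state_integrable B μ (star a * b)
        have h1 : phi B μ ((⋃ n, f n) \ ⋃ n ∈ F, f n) (star a * b)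
            = phi B μ (⋃ n, f n) (star a * b) - phi B μ (⋃ n ∈ F, f n) (star a * b) :=
          setIntegral_diff (F.measurableSet_biUnion fun n _ => hf n) hi.integrableOn
            (Set.iUnion₂_subset fun n _ => Set.subset_iUnion f n)
        have h2 : phi B μ (⋃ n ∈ F, f n) (star a * b) = ∑ n ∈ F, phi B μ (f n) (star a * b) :=
          integral_biUnion_finset F (fun n _ => hf n) (hd.set_pairwise _)
            (fun n _ => hi.integrableOn)
        rw [h1, h2]; ring
    have key := weak_tendsto B x (l := Filter.atTop)
      (fun F : Finset ℕ => T ((⋃ n, f n) \ ⋃ n ∈ F, f n)) (C := 1)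
      (fun F => hTn _) (fun F => hTK _) (fun a b => ?_) y z
    · have h := (tendsto_const_nhds (x := ⟪y, T (⋃ n, f n) z⟫_ℂ)).sub key
      rw [sub_zero] at h
      refine h.congr fun F => ?_
      rw [← hadd]
      simp [inner_sub_right, ContinuousLinearMap.sum_apply, inner_sum]
    · have hs : HasSum (fun n => phi B μ (f n) (star a * b)) (phi B μ (⋃ n, f n) (star a * b)) :=
        hasSum_integral_iUnion hf hd (state_integrable B μ (star a * b)).integrableOn
      have h := (tendsto_const_nhds (x := phi B μ (⋃ n, f n) (star a * b))).sub hs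
      rw [sub_self] at h
      refine h.congr fun F => ?_
      rw [← hadd]
      simp [inner_sub_right, ContinuousLinearMap.sum_apply, inner_sum, hTB]
  · intro S _
    refine ⟨cp_mul (T S) (hTpos S) E (fun A => hEc A _ (hTM S)) hEcp, ?_⟩
    simpa [hE1] using hT1 S
  · intro S _ C hC
    simp [hE1, hEid' C hC]
  · intro S _ b
    have hb : E (b : H →L[ℂ] H) = b := hEid' _ (Set.subset_centralizer_centralizer b.2)
    have := hTB S 1 b
    simp only [hb, ContinuousLinearMap.mul_apply]
    simpa [phi] using this

end
end
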